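/- Let H be a Hopf monoid in a braided monoidal category C (not assumed symmetric), and let (δ, σ) be a braided modular pair in involution for H. Then σ₂ ∘ τ₃ ∘ τ₃ = τ₂ ∘ σ₀ as morphisms H ⊗ H ⊗ H → H ⊗ H, where σ₀ := (ε ⊗ 1_{H⊗H}) and σ₂ := (1_{H⊗H} ⊗ ε) (composed with the evident unitors). -/

import Mathlib

open CategoryTheory MonoidalCategory

universe v u

/-- A Hopf algebra object (a "braided Hopf algebra") in a braided monoidal category `C`,
consisting of an object `X` with multiplication `mul`, unit `one`, comultiplication
`comul`, counit `counit` and antipode `antipode`, satisfying the usual axioms, with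
the compatibility of `mul` and `comul` expressed via the braiding. -/
structure HopfObj (C : Type u) [Category.{v} C] [MonoidalCategory C]
    [BraidedCategory C] where
  X : C
  mul : X ⊗ X ⟶ X
  one : 𝟙_ C ⟶ X
  comul : X ⟶ X ⊗ X
  counit : X ⟶ 𝟙_ C
  antipode : X ⟶ X
  mul_assoc : (mul ▷ X) ≫ mul = (α_ X X X).hom ≫ (X ◁ mul) ≫ mul
  one_mul : (one ▷ X) ≫ mul = (λ_ X).hom
  mul_one : (X ◁ one) ≫ mul = (ρ_ X).hom
  comul_assoc : comul ≫ (comul ▷ X) ≫ (α_ X X X).hom = comul ≫ (X ◁ comul)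
  counit_comul : comul ≫ (counit ▷ X) = (λ_ X).inv
  comul_counit : comul ≫ (X ◁ counit) = (ρ_ X).inv
  mul_comul : mul ≫ comul =
      (comul ⊗ₘ comul) ≫ (α_ X X (X ⊗ X)).hom ≫ (X ◁ (α_ X X X).inv) ≫
        (X ◁ ((β_ X X).hom ▷ X)) ≫ (X ◁ (α_ X X X).hom) ≫
        (α_ X X (X ⊗ X)).inv ≫ (mul ⊗ₘ mul)
  one_comul : one ≫ comul = (λ_ (𝟙_ C)).inv ≫ (one ⊗ₘ one)
  mul_counit : mul ≫ counit = (counit ⊗ₘ counit) ≫ (λ_ (𝟙_ C)).hom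
  one_counit : one ≫ counit = 𝟙 (𝟙_ C)
  antipode_left : comul ≫ (antipode ▷ X) ≫ mul = counit ≫ one
  antipode_right : comul ≫ (X ◁ antipode) ≫ mul = counit ≫ one

variable {C : Type u} [Category.{v} C] [MonoidalCategory C] [BraidedCategory C]

/-- The `δ`-twisted antipode `S̃ = λ_H ∘ (δ ⊗ S) ∘ Δ`. -/
def HopfObj.twist (A : _root_.HopfObj C) (δ : A.X ⟶ 𝟙_ C) : A.X ⟶ A.X :=
  A.comul ≫ (δ ⊗ₘ A.antipode) ≫ (λ_ A.X).hom

/-- `δ : H ⟶ 𝟙` is a character, i.e. a morphism of monoid objects. -/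
def HopfObj.IsCharacter (A : _root_.HopfObj C) (δ : A.X ⟶ 𝟙_ C) : Prop :=
  A.mul ≫ δ = (δ ⊗ₘ δ) ≫ (λ_ (𝟙_ C)).hom ∧ A.one ≫ δ = 𝟙 (𝟙_ C)

/-- `σ : 𝟙 ⟶ H` is a cocharacter, i.e. a morphism of comonoid objects. -/
def HopfObj.IsCocharacter (A : _root_.HopfObj C) (σ : 𝟙_ C ⟶ A.X) : Prop :=
  σ ≫ A.comul = (λ_ (𝟙_ C)).inv ≫ (σ ⊗ₘ σ) ∧ σ ≫ A.counit = 𝟙 (𝟙_ C)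

/-- The morphism `m ∘ (m ⊗ 1_H) ∘ ((S ∘ σ) ⊗ (S̃ ∘ S̃) ⊗ σ) : H ⟶ H`
(with unitors inserted). -/
def HopfObj.bmpiMap (A : _root_.HopfObj C) (δ : A.X ⟶ 𝟙_ C) (σ : 𝟙_ C ⟶ A.X) :
    A.X ⟶ A.X :=
  (λ_ A.X).inv ≫ ((σ ≫ A.antipode) ⊗ₘ (A.twist δ ≫ A.twist δ)) ≫
    (ρ_ (A.X ⊗ A.X)).inv ≫ ((A.X ⊗ A.X) ◁ σ) ≫ (A.mul ▷ A.X) ≫ A.mul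

/-- `(δ, σ)` is a braided modular pair in involution. -/
def HopfObj.IsBMPI (A : _root_.HopfObj C) (δ : A.X ⟶ 𝟙_ C) (σ : 𝟙_ C ⟶ A.X) : Prop :=
  σ ≫ δ = 𝟙 (𝟙_ C) ∧ A.bmpiMap δ σ = 𝟙 A.X

/-- The cyclic operator `τ₂ = (m ⊗ m) ∘ (1_H ⊗ ψ ⊗ 1_H) ∘ ((Δ ∘ S̃) ⊗ 1_H ⊗ σ)`,
with the `σ`-factor inserted via `H ⊗ H ≅ (H ⊗ H) ⊗ 𝟙`. -/
def HopfObj.tau2 (A : _root_.HopfObj C) (δ : A.X ⟶ 𝟙_ C) (σ : 𝟙_ C ⟶ A.X) :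
    A.X ⊗ A.X ⟶ A.X ⊗ A.X :=
  (ρ_ (A.X ⊗ A.X)).inv ≫ (((A.twist δ ≫ A.comul) ⊗ₘ 𝟙 A.X) ⊗ₘ σ) ≫
    (((α_ A.X A.X A.X).hom ≫ (A.X ◁ (β_ A.X A.X).hom) ≫ (α_ A.X A.X A.X).inv) ▷ A.X) ≫
    (α_ (A.X ⊗ A.X) A.X A.X).hom ≫ (A.mul ⊗ₘ A.mul)

/-- `Δ² = (1_H ⊗ Δ) ∘ Δ`. -/
def HopfObj.comul2 (A : _root_.HopfObj C) : A.X ⟶ A.X ⊗ (A.X ⊗ A.X) :=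
  A.comul ≫ (A.X ◁ A.comul)

/-- `m₃`, the multiplication of the threefold braided tensor product algebra:
`(m ⊗ m ⊗ m) ∘ (1_H ⊗ ψ ⊗ 1_{H⊗H⊗H}) ∘ (1_{H⊗H⊗H} ⊗ ψ ⊗ 1_H) ∘ (1_{H⊗H} ⊗ ψ ⊗ 1_{H⊗H})`
(with associators inserted). -/
def HopfObj.mul3 (A : _root_.HopfObj C) :
    (A.X ⊗ (A.X ⊗ A.X)) ⊗ (A.X ⊗ (A.X ⊗ A.X)) ⟶ A.X ⊗ (A.X ⊗ A.X) :=
  (α_ A.X (A.X ⊗ A.X) (A.X ⊗ (A.X ⊗ A.X))).hom ≫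
  (A.X ◁ (α_ A.X A.X (A.X ⊗ (A.X ⊗ A.X))).hom) ≫
  (A.X ◁ (A.X ◁ ((α_ A.X A.X (A.X ⊗ A.X)).inv ≫
    ((β_ A.X A.X).hom ▷ (A.X ⊗ A.X)) ≫ (α_ A.X A.X (A.X ⊗ A.X)).hom))) ≫
  (A.X ◁ (A.X ◁ (A.X ◁ ((α_ A.X A.X A.X).inv ≫
    ((β_ A.X A.X).hom ▷ A.X) ≫ (α_ A.X A.X A.X).hom)))) ≫
  (A.X ◁ ((α_ A.X A.X (A.X ⊗ (A.X ⊗ A.X))).inv ≫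
    ((β_ A.X A.X).hom ▷ (A.X ⊗ (A.X ⊗ A.X))) ≫
    (α_ A.X A.X (A.X ⊗ (A.X ⊗ A.X))).hom)) ≫
  (A.X ◁ (A.X ◁ (α_ A.X A.X (A.X ⊗ A.X)).inv)) ≫
  (α_ A.X A.X ((A.X ⊗ A.X) ⊗ (A.X ⊗ A.X))).inv ≫
  (A.mul ⊗ₘ (A.mul ⊗ₘ A.mul))

/-- The cyclic operator `τ₃ = m₃ ∘ ((Δ² ∘ S̃) ⊗ 1_{H⊗H} ⊗ σ)`, with the `σ`-factor
inserted via `H^{⊗3} ≅ H^{⊗3} ⊗ 𝟙`. -/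
def HopfObj.tau3 (A : _root_.HopfObj C) (δ : A.X ⟶ 𝟙_ C) (σ : 𝟙_ C ⟶ A.X) :
    A.X ⊗ (A.X ⊗ A.X) ⟶ A.X ⊗ (A.X ⊗ A.X) :=
  ((A.twist δ ≫ A.comul2) ⊗ₘ (A.X ◁ ((ρ_ A.X).inv ≫ (A.X ◁ σ)))) ≫ A.mul3

/-- Codegeneracy `σ₀ = ε ⊗ 1_{H⊗H}` (composed with the evident unitor). -/
def HopfObj.deg0 (A : _root_.HopfObj C) : A.X ⊗ (A.X ⊗ A.X) ⟶ A.X ⊗ A.X :=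
  (A.counit ▷ (A.X ⊗ A.X)) ≫ (λ_ (A.X ⊗ A.X)).hom

/-- Codegeneracy `σ₁ = 1_H ⊗ ε ⊗ 1_H` (composed with the evident unitor). -/
def HopfObj.deg1 (A : _root_.HopfObj C) : A.X ⊗ (A.X ⊗ A.X) ⟶ A.X ⊗ A.X :=
  A.X ◁ ((A.counit ▷ A.X) ≫ (λ_ A.X).hom)

/-- Codegeneracy `σ₂ = 1_{H⊗H} ⊗ ε` (composed with the evident unitor). -/
def HopfObj.deg2 (A : _root_.HopfObj C) : A.X ⊗ (A.X ⊗ A.X) ⟶ A.X ⊗ A.X :=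
  A.X ◁ ((A.X ◁ A.counit) ≫ (ρ_ A.X).hom)


namespace BMPIAux

theorem mid {X B : C} (t : X ⟶ X) :
    tensorμ X X X B ≫ ((t ⊗ₘ t) ≫ (β_ X X).hom) ▷ (X ⊗ B) ≫ (α_ X X (X ⊗ B)).hom ≫
      X ◁ (α_ X X B).inv
    = (α_ (X ⊗ X) X B).inv ≫ (β_ (X ⊗ X) X).hom ▷ B ≫ (α_ X (X ⊗ X) B).hom ≫
      (t ⊗ₘ ((t ▷ X) ▷ B)) := by
  rw [BraidedCategory.braiding_naturality, BraidedCategory.braiding_tensor_left_hom, tensorμ,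
    MonoidalCategory.tensorHom_def, MonoidalCategory.tensorHom_def]
  calc _ = 𝟙 _ ⊗≫ X ◁ (β_ X X).hom ▷ B ⊗≫ (β_ X X).hom ▷ (X ⊗ B) ⊗≫
      (t ▷ X ≫ X ◁ t) ▷ (X ⊗ B) ⊗≫ 𝟙 _ := by monoidal
    _ = _ := by monoidal

theorem key {X B : C} (m : X ⊗ X ⟶ X) (Δ : X ⟶ X ⊗ X) (η : 𝟙_ C ⟶ X) (t : X ⟶ X)
    (δ : X ⟶ 𝟙_ C) (act : X ⊗ B ⟶ B)
    (hS : m ≫ t = (t ⊗ₘ t) ≫ (β_ X X).hom ≫ m)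
    (hassoc : m ▷ B ≫ act = (α_ X X B).hom ≫ X ◁ act ≫ act)
    (hone : Δ ≫ t ▷ X ≫ m = δ ≫ η)
    (hact : η ▷ B ≫ act = (λ_ B).hom) :
    Δ ▷ (X ⊗ B) ≫ tensorμ X X X B ≫ ((m ≫ t) ⊗ₘ act) ≫ act =
      (δ ▷ (X ⊗ B)) ≫ (λ_ (X ⊗ B)).hom ≫ t ▷ B ≫ act := by
  have h1 : ((m ≫ t) ⊗ₘ act) ≫ act = ((t ⊗ₘ t) ≫ (β_ X X).hom) ▷ (X ⊗ B) ≫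
      (α_ X X (X ⊗ B)).hom ≫ X ◁ (α_ X X B).inv ≫ X ◁ m ▷ B ≫ X ◁ act ≫ act := by
    rw [hS, ← whiskerLeft_comp_assoc _ (m ▷ B), hassoc, ← whiskerLeft_comp_assoc,
      Iso.inv_hom_id_assoc, tensorHom_def']
    rw [← Category.assoc (t ⊗ₘ t), comp_whiskerRight _ m, Category.assoc, Category.assoc, hassoc]
    rw [whisker_exchange_assoc, associator_naturality_right_assoc, whiskerLeft_comp_assoc]
  have h2 := mid (B := B) t
  have h3 : Δ ▷ (X ⊗ B) ≫ (α_ (X ⊗ X) X B).inv ≫ (β_ (X ⊗ X) X).hom ▷ B = 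
     (α_ X X B).inv ≫ (β_ X X).hom ▷ B ≫ (X ◁ Δ) ▷ B := by
    rw [associator_inv_naturality_left_assoc, ← comp_whiskerRight,
      BraidedCategory.braiding_naturality_left, comp_whiskerRight]
  have h4 : (t ⊗ₘ ((t ▷ X) ▷ B)) = X ◁ (t ▷ X) ▷ B ≫ t ▷ ((X ⊗ X) ⊗ B) := tensorHom_def' _ _
  rw [h1]
  rw [reassoc_of% h2, reassoc_of% h3, h4]
  simp only [Category.assoc]
  rw [← whisker_exchange_assoc, ← whisker_exchange_assoc, associator_naturality_middle_assoc]
  simp only [← whiskerLeft_comp_assoc, ← comp_whiskerRight_assoc, Category.assoc]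
  rw [hone, comp_whiskerRight_assoc, hact]
  rw [whiskerLeft_comp_assoc, ← associator_naturality_middle_assoc, ← comp_whiskerRight_assoc,
     ← BraidedCategory.braiding_naturality_left]
  simp
  
theorem mul3_eq (A : _root_.HopfObj C) : A.mul3 =
    tensorμ A.X (A.X ⊗ A.X) A.X (A.X ⊗ A.X) ≫
      (A.mul ⊗ₘ (tensorμ A.X A.X A.X A.X ≫ (A.mul ⊗ₘ A.mul))) := by
  have h : ∀ X : C, (α_ X (X ⊗ X) (X ⊗ (X ⊗ X))).hom ≫
  (X ◁ (α_ X X (X ⊗ (X ⊗ X))).hom) ≫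
  (X ◁ (X ◁ ((α_ X X (X ⊗ X)).inv ≫
    ((β_ X X).hom ▷ (X ⊗ X)) ≫ (α_ X X (X ⊗ X)).hom))) ≫
  (X ◁ (X ◁ (X ◁ ((α_ X X X).inv ≫
    ((β_ X X).hom ▷ X) ≫ (α_ X X X).hom)))) ≫
  (X ◁ ((α_ X X (X ⊗ (X ⊗ X))).inv ≫
    ((β_ X X).hom ▷ (X ⊗ (X ⊗ X))) ≫
    (α_ X X (X ⊗ (X ⊗ X))).hom)) ≫
  (X ◁ (X ◁ (α_ X X (X ⊗ X)).inv)) ≫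
  (α_ X X ((X ⊗ X) ⊗ (X ⊗ X))).inv = tensorμ X (X ⊗ X) X (X ⊗ X) ≫
      ((X ⊗ X) ◁ (tensorμ X X X X)) := by
    intro X
    simp only [tensorμ, BraidedCategory.braiding_tensor_left_hom]
    calc _ = 𝟙 _ ⊗≫ X ◁ X ◁ (β_ X X).hom ▷ (X ⊗ X) ⊗≫
        X ◁ ((X ⊗ X) ◁ (β_ X X).hom ≫ (β_ X X).hom ▷ (X ⊗ X)) ▷ X ⊗≫ 𝟙 _ := by monoidal
      _ = _ := by rw [whisker_exchange]; monoidal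
  have h2 : A.mul ⊗ₘ (tensorμ A.X A.X A.X A.X ≫ (A.mul ⊗ₘ A.mul)) =
    ((A.X ⊗ A.X) ◁ (tensorμ A.X A.X A.X A.X)) ≫ (A.mul ⊗ₘ (A.mul ⊗ₘ A.mul)) := by
    rw [← id_tensorHom, tensorHom_comp_tensorHom, Category.id_comp]
  rw [h2, ← Category.assoc, ← h, HopfObj.mul3]
  simp only [Category.assoc]

theorem mulB_p (A : _root_.HopfObj C) :
    (tensorμ A.X A.X A.X A.X ≫ (A.mul ⊗ₘ A.mul)) ≫ A.X ◁ A.counit ≫ (ρ_ A.X).hom =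
    ((A.X ◁ A.counit ≫ (ρ_ A.X).hom) ⊗ₘ (A.X ◁ A.counit ≫ (ρ_ A.X).hom)) ≫ A.mul := by
  have h := tensorμ_natural (𝟙 A.X) A.counit (𝟙 A.X) A.counit
  simp only [id_tensorHom, tensorHom_id, id_whiskerRight] at h
  rw [← tensorHom_comp_tensorHom, rightUnitor_monoidal]
  simp only [Category.assoc]
  rw [reassoc_of% h]
  congr 1
  have h2 : (A.mul ⊗ₘ A.mul) ≫ A.X ◁ A.counit =
      (𝟙 _ ⊗ₘ (A.counit ⊗ₘ A.counit)) ≫ (_ ◁ (λ_ (𝟙_ C)).hom) ≫ A.mul ▷ _ := by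
    rw [← id_tensorHom, ← id_tensorHom, ← tensorHom_id]
    simp only [tensorHom_comp_tensorHom, A.mul_counit]
    simp
  rw [reassoc_of% h2]
  simp

theorem mul3_deg2 (A : _root_.HopfObj C) : A.mul3 ≫ A.deg2 =
    (A.deg2 ⊗ₘ A.deg2) ≫ tensorμ A.X A.X A.X A.X ≫ (A.mul ⊗ₘ A.mul) := by
  have h := tensorμ_natural (𝟙 A.X) (A.X ◁ A.counit ≫ (ρ_ A.X).hom) (𝟙 A.X)
    (A.X ◁ A.counit ≫ (ρ_ A.X).hom)
  simp only [id_tensorHom, id_whiskerRight, id_tensorHom_id] at h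
  rw [HopfObj.deg2, reassoc_of% h, mul3_eq, Category.assoc]
  congr 1
  rw [← id_tensorHom, tensorHom_comp_tensorHom, tensorHom_comp_tensorHom, mulB_p]
  simp

abbrev act (A : _root_.HopfObj C) : A.X ⊗ (A.X ⊗ A.X) ⟶ A.X ⊗ A.X :=
  A.comul ▷ (A.X ⊗ A.X) ≫ tensorμ A.X A.X A.X A.X ≫ (A.mul ⊗ₘ A.mul)

theorem tau3_deg2 (A : _root_.HopfObj C) (δ : A.X ⟶ 𝟙_ C) (σ : 𝟙_ C ⟶ A.X)
    (hσ : A.IsCocharacter σ) :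
    A.tau3 δ σ ≫ A.deg2 = A.twist δ ▷ _ ≫ act A := by
  have h1 : A.comul2 ≫ A.deg2 = A.comul := by
    rw [HopfObj.comul2, HopfObj.deg2, Category.assoc, ← whiskerLeft_comp,
      reassoc_of% A.comul_counit]
    simp
  have h2 : (A.X ◁ ((ρ_ A.X).inv ≫ (A.X ◁ σ))) ≫ A.deg2 = 𝟙 _ := by
    rw [HopfObj.deg2, ← whiskerLeft_comp, Category.assoc, ← whiskerLeft_comp_assoc, hσ.2]
    simp
  rw [HopfObj.tau3, Category.assoc, mul3_deg2, tensorHom_comp_tensorHom_assoc, h2,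
    Category.assoc, h1, tensorHom_id, comp_whiskerRight, Category.assoc]

theorem tau2_eq (A : _root_.HopfObj C) (δ : A.X ⟶ 𝟙_ C) (σ : 𝟙_ C ⟶ A.X) :
    A.tau2 δ σ = (A.twist δ ⊗ₘ ((ρ_ A.X).inv ≫ A.X ◁ σ)) ≫ act A := by
  have h : (A.twist δ ⊗ₘ ((ρ_ A.X).inv ≫ A.X ◁ σ)) ≫ A.comul ▷ (A.X ⊗ A.X) =
      (A.twist δ ≫ A.comul) ▷ _ ≫ _ ◁ ((ρ_ A.X).inv ≫ A.X ◁ σ) := by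
    rw [← tensorHom_id, tensorHom_comp_tensorHom, Category.comp_id,
      MonoidalCategory.tensorHom_def]
  rw [HopfObj.tau2, act, reassoc_of% h, tensorμ]
  simp only [← Category.assoc]
  congr 1
  simp only [MonoidalCategory.tensorHom_def]
  monoidal

/-- Mathlib Hopf structure. -/
@[reducible] def inst (A : _root_.HopfObj C) : CategoryTheory.HopfObj A.X where
  mul := A.mul
  one := A.one
  comul := A.comul
  counit := A.counit
  antipode := A.antipode
  mul_assoc := A.mul_assoc
  one_mul := A.one_mul
  mul_one := A.mul_one
  comul_assoc := A.comul_assoc.symm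
  counit_comul := A.counit_comul
  comul_counit := A.comul_counit
  mul_comul := by simpa [tensorμ] using A.mul_comul
  one_comul := A.one_comul
  mul_counit := by simpa using A.mul_counit
  one_counit := A.one_counit
  antipode_left := A.antipode_left
  antipode_right := A.antipode_right

theorem act_one (A : _root_.HopfObj C) :
    A.one ▷ (A.X ⊗ A.X) ≫ act A = (λ_ (A.X ⊗ A.X)).hom := by
  let := inst A
  have h := MonObj.one_mul (A.X ⊗ A.X)
  have h2 := BimonObj.one_comul A.X
  change A.one ≫ A.comul = _ at h2
  rw [← h2] at h
  rw [act, ← comp_whiskerRight_assoc]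
  exact h

theorem act_mul (A : _root_.HopfObj C) :
    A.mul ▷ (A.X ⊗ A.X) ≫ act A = (α_ A.X A.X (A.X ⊗ A.X)).hom ≫ A.X ◁ act A ≫ act A := by
  let := inst A
  have h := MonObj.mul_assoc (A.X ⊗ A.X)
  have h2 : A.mul ≫ A.comul = (A.comul ⊗ₘ A.comul) ≫ MonObj.mul (X := A.X ⊗ A.X) :=
    BimonObj.mul_comul A.X
  have h3 : act A = A.comul ▷ _ ≫ MonObj.mul (X := A.X ⊗ A.X) := rfl
  rw [h3, ← comp_whiskerRight_assoc, h2, comp_whiskerRight_assoc, h,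
    MonoidalCategory.tensorHom_def]
  simp only [MonoidalCategory.whiskerLeft_comp, comp_whiskerRight, Category.assoc]
  rw [whisker_exchange_assoc, associator_naturality_middle_assoc,
    associator_naturality_left_assoc, whisker_exchange_assoc]

theorem mul_antipode (A : _root_.HopfObj C) :
    A.mul ≫ A.antipode = (A.antipode ⊗ₘ A.antipode) ≫ (β_ _ _).hom ≫ A.mul := by
  let := inst A
  exact CategoryTheory.HopfObj.mul_antipode A.X

theorem mul_twist (A : _root_.HopfObj C) (δ : A.X ⟶ 𝟙_ C) (hδ : A.IsCharacter δ) :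
    A.mul ≫ A.twist δ = (A.twist δ ⊗ₘ A.twist δ) ≫ (β_ _ _).hom ≫ A.mul := by
  have hc : A.mul ≫ A.comul = (A.comul ⊗ₘ A.comul) ≫ tensorμ A.X A.X A.X A.X ≫
      (A.mul ⊗ₘ A.mul) := by
    rw [A.mul_comul, tensorμ]; simp
  have h3 : (A.mul ⊗ₘ A.mul) ≫ (δ ⊗ₘ A.antipode) =
    ((δ ⊗ₘ δ) ⊗ₘ (A.antipode ⊗ₘ A.antipode)) ≫ 
     ((λ_ (𝟙_ C)).hom ⊗ₘ ((β_ _ _).hom ≫ A.mul)) := by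
    rw [tensorHom_comp_tensorHom, tensorHom_comp_tensorHom, hδ.1, mul_antipode]
  rw [HopfObj.twist, reassoc_of% hc, reassoc_of% h3, ← tensorμ_natural_assoc,
    ← tensorHom_comp_tensorHom_assoc, ← tensorHom_comp_tensorHom_assoc]
  congr 2
  rw [leftUnitor_monoidal]
  simp [MonoidalCategory.tensorHom_def]

theorem twist_conv (A : _root_.HopfObj C) (δ : A.X ⟶ 𝟙_ C) :
    A.comul ≫ A.twist δ ▷ A.X ≫ A.mul = δ ≫ A.one := by
  have h1 : A.twist δ = A.comul ≫ A.X ◁ A.antipode ≫ δ ▷ A.X ≫ (λ_ A.X).hom := by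
    rw [HopfObj.twist, tensorHom_def'_assoc]
  have h2 : A.comul ≫ A.comul ▷ A.X = A.comul ≫ A.X ◁ A.comul ≫ (α_ _ _ _).inv := by
    rw [← reassoc_of% A.comul_assoc]; simp
  rw [h1]
  simp only [comp_whiskerRight, Category.assoc]
  rw [reassoc_of% h2]
  have h3 : (α_ A.X A.X A.X).inv ≫ (A.X ◁ A.antipode) ▷ A.X ≫ δ ▷ A.X ▷ A.X ≫
    (λ_ A.X).hom ▷ A.X ≫ A.mul = A.X ◁ (A.antipode ▷ A.X ≫ A.mul) ≫ δ ▷ A.X ≫ (λ_ A.X).hom := by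
    simp [whisker_exchange_assoc]
  rw [h3, ← whiskerLeft_comp_assoc, A.antipode_left, whiskerLeft_comp_assoc,
    reassoc_of% A.comul_counit, whisker_exchange_assoc]
  simp [unitors_equal]

theorem twist_char (A : _root_.HopfObj C) (δ : A.X ⟶ 𝟙_ C) (hδ : A.IsCharacter δ) :
    A.twist δ ≫ δ = A.counit := by
  have h := A.antipode_right =≫ δ
  simp only [Category.assoc, hδ.1, hδ.2, Category.comp_id] at h
  rw [← h, HopfObj.twist]
  simp [MonoidalCategory.tensorHom_def, whisker_exchange_assoc]

end BMPIAux

/-- `σ₂ ∘ τ₃ ∘ τ₃ = τ₂ ∘ σ₀` as morphisms `H ⊗ H ⊗ H ⟶ H ⊗ H`. -/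
theorem HopfObj.deg2_tau3_tau3 (A : _root_.HopfObj C) (δ : A.X ⟶ 𝟙_ C) (σ : 𝟙_ C ⟶ A.X)
    (hδ : A.IsCharacter δ) (hσ : A.IsCocharacter σ) (hbmpi : A.IsBMPI δ σ) :
    A.tau3 δ σ ≫ A.tau3 δ σ ≫ A.deg2 = A.deg0 ≫ A.tau2 δ σ := by
  have key := BMPIAux.key A.mul A.comul A.one (A.twist δ) δ (BMPIAux.act A)
    (BMPIAux.mul_twist A δ hδ) (BMPIAux.act_mul A) (BMPIAux.twist_conv A δ) (BMPIAux.act_one A)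
  have h1 : A.tau3 δ σ = (A.twist δ ⊗ₘ (A.X ◁ ((ρ_ A.X).inv ≫ (A.X ◁ σ)))) ≫
      A.comul ▷ _ ≫ tensorμ A.X A.X A.X (A.X ⊗ A.X) ≫ (A.mul ⊗ₘ BMPIAux.act A) := by
    have hn := tensorμ_natural_left (𝟙 A.X) A.comul A.X (A.X ⊗ A.X)
    simp only [id_tensorHom, id_whiskerRight] at hn
    have h2 : A.mul ⊗ₘ BMPIAux.act A = ((A.X ⊗ A.X) ◁ A.comul ▷ (A.X ⊗ A.X)) ≫
      (A.mul ⊗ₘ (tensorμ A.X A.X A.X A.X ≫ (A.mul ⊗ₘ A.mul))) := by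
      rw [← id_tensorHom, tensorHom_comp_tensorHom, Category.id_comp]
    rw [h2, ← reassoc_of% hn, HopfObj.tau3, BMPIAux.mul3_eq, HopfObj.comul2]
    rw [← comp_whiskerRight_assoc, ← tensorHom_id, tensorHom_comp_tensorHom_assoc,
      Category.comp_id]
  have h2 : (A.mul ⊗ₘ BMPIAux.act A) ≫ A.twist δ ▷ (A.X ⊗ A.X) =
      ((A.mul ≫ A.twist δ) ⊗ₘ BMPIAux.act A) := by
    rw [← tensorHom_id, tensorHom_comp_tensorHom, Category.comp_id]
  rw [BMPIAux.tau3_deg2 A δ σ hσ, h1]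
  simp only [Category.assoc]
  rw [reassoc_of% h2, key, BMPIAux.tau2_eq, HopfObj.deg0, tensorHom_def'_assoc,
    ← comp_whiskerRight_assoc, BMPIAux.twist_char A δ hδ, tensorHom_def'_assoc,
    whisker_exchange_assoc, leftUnitor_naturality_assoc, Category.assoc]
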